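/- There exists a finite monotone L-family (L_v)_{v ∈ Fin n} such that no family (f_v)_{v ∈ Fin n} of interval filaments satisfies, for all distinct u, v, that the curves of f_u and f_v intersect iff L_u ∩ L_v ≠ ∅. (There is a monotone L-graph which is not an interval filament graph.) -/

import Mathlib

/-!
Scale the corners so that they lie on the diagonal. The L-shape with corner `(c, c)`, right end `r`
and bottom `l` is then encoded by a point `c` of an interval `[l, r]`, and two L-shapes meet exactly
when each of the two points lies in the interval of the other.

Two filaments that do not meet are either side by side or *nested*: one domain lies in the interior
of the other and the curve above it is strictly lower (`disjoint_cases`). Three facts about nesting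
carry the proof.
* Nesting is asymmetric.
* If `u` is nested under `v`, and `w` meets `u` but not `v`, then `w` is nested under `v`
  (`Nested.propagate`). Hence nesting under `v` spreads along walks avoiding the neighbourhood
  of `v`.
* In a nonempty finite set of filaments, take one whose right endpoint `b` is leftmost. The domains
  of all its neighbours contain `b`, so two of these neighbours are nested as soon as they are
  disjoint (`exists_nested_nbrs`). In particular every induced cycle of length at least four
  contains a nested pair at distance two.

The graph is an induced 12-cycle `0, …, 11` with two extra paths `0, 12, 13, 3` and `6, 14, 15, 9`.
The 12-cycle contains a vertex `t` with another cycle vertex nested under it. One of the two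
6-cycles `0, 1, 2, 3, 13, 12` and `6, 7, 8, 9, 15, 14` avoids the closed neighbourhood of `t`,
and by spreading, all of it is nested under `t`. That 6-cycle contains itself a nested pair, say `w`
under `q`. From `w` one can walk to `t` outside the closed neighbourhood of `q`, so `t` is nested
under `q`, while `q` is nested under `t`: a contradiction.
-/

/-- The L-shape with corner `(x₀, y₀)`, bottom `y₁` and right end `x₁`:
`({x₀} × [y₁, y₀]) ∪ ([x₀, x₁] × {y₀})`. -/
def CornerLShape (x₀ x₁ y₀ y₁ : ℝ) : Set (ℝ × ℝ) :=
  ({x₀} ×ˢ Set.Icc y₁ y₀) ∪ (Set.Icc x₀ x₁ ×ˢ {y₀})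

/-- The curve of an interval filament `f` on domain `[a,b]`. -/
def FilCurve (a b : ℝ) (f : ℝ → ℝ) : Set (ℝ × ℝ) :=
  {p : ℝ × ℝ | p.1 ∈ Set.Icc a b ∧ p.2 = f p.1}

/-! ### Nesting of interval filaments -/

/-- The filament `f` on `[a, b]` lies strictly below the filament `g` on `[c, d]`, with its domain
in the interior of `[c, d]`. -/
def Nested (a b : ℝ) (f : ℝ → ℝ) (c d : ℝ) (g : ℝ → ℝ) : Prop :=
  c < a ∧ b < d ∧ ∀ x ∈ Set.Icc a b, f x < g x

/-- `f` is an interval filament with domain `[a, b]`. -/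
structure IsFilament (a b : ℝ) (f : ℝ → ℝ) : Prop where
  lt : a < b
  cont : ContinuousOn f (Set.Icc a b)
  nonneg : ∀ x ∈ Set.Icc a b, 0 ≤ f x
  left : f a = 0
  right : f b = 0

/-- The curves of the two filaments meet. -/
def Meet (a b : ℝ) (f : ℝ → ℝ) (c d : ℝ) (g : ℝ → ℝ) : Prop :=
  ∃ x, x ∈ Set.Icc a b ∧ x ∈ Set.Icc c d ∧ f x = g x

lemma filCurve_inter_nonempty (a b : ℝ) (f : ℝ → ℝ) (c d : ℝ) (g : ℝ → ℝ) :
    (FilCurve a b f ∩ FilCurve c d g).Nonempty ↔ Meet a b f c d g := by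
  constructor
  · rintro ⟨⟨x, y⟩, ⟨h1, h2⟩, h3, h4⟩
    exact ⟨x, h1, h3, h2.symm.trans h4⟩
  · rintro ⟨x, h1, h2, h3⟩
    exact ⟨(x, f x), ⟨h1, rfl⟩, h2, h3⟩

lemma Meet.symm {a b : ℝ} {f : ℝ → ℝ} {c d : ℝ} {g : ℝ → ℝ} (h : Meet a b f c d g) :
    Meet c d g a b f := by
  obtain ⟨x, h1, h2, h3⟩ := h
  exact ⟨x, h2, h1, h3.symm⟩

/-- The intermediate value theorem for the difference of two filaments. -/
lemma meet_of_sign_change {a b : ℝ} {f : ℝ → ℝ} {c d : ℝ} {g : ℝ → ℝ}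
    (hf : IsFilament a b f) (hg : IsFilament c d g) {p q : ℝ}
    (hp : p ∈ Set.Icc a b) (hp' : p ∈ Set.Icc c d) (hq : q ∈ Set.Icc a b) (hq' : q ∈ Set.Icc c d)
    (h1 : g p ≤ f p) (h2 : f q ≤ g q) : Meet a b f c d g := by
  have hcon : Set.OrdConnected (Set.Icc a b ∩ Set.Icc c d) :=
    Set.ordConnected_Icc.inter Set.ordConnected_Icc
  obtain ⟨x, hx, hxe⟩ := hcon.isPreconnected.intermediate_value₂ ⟨hp, hp'⟩ ⟨hq, hq'⟩
    (hg.cont.mono Set.inter_subset_right) (hf.cont.mono Set.inter_subset_left) h1 h2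
  exact ⟨x, hx.1, hx.2, hxe.symm⟩

/-- Two filaments with overlapping domains, neither of which contains the other in its interior,
meet. -/
lemma meet_of_overlap {a b : ℝ} {f : ℝ → ℝ} {c d : ℝ} {g : ℝ → ℝ}
    (hf : IsFilament a b f) (hg : IsFilament c d g) (h1 : a ≤ c) (h2 : c ≤ b) (h3 : b ≤ d) :
    Meet a b f c d g := by
  have hc : c ∈ Set.Icc a b := ⟨h1, h2⟩
  have hc' : c ∈ Set.Icc c d := ⟨le_rfl, hg.lt.le⟩
  have hb : b ∈ Set.Icc a b := ⟨hf.lt.le, le_rfl⟩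
  have hb' : b ∈ Set.Icc c d := ⟨h2, h3⟩
  refine meet_of_sign_change hf hg hc hc' hb hb' ?_ ?_
  · rw [hg.left]; exact hf.nonneg c hc
  · rw [hf.right]; exact hg.nonneg b hb'

lemma nested_of_subset {a b : ℝ} {f : ℝ → ℝ} {c d : ℝ} {g : ℝ → ℝ}
    (hf : IsFilament a b f) (hg : IsFilament c d g) (h1 : c < a) (h2 : b < d)
    (hm : ¬ Meet a b f c d g) : Nested a b f c d g := by
  refine ⟨h1, h2, fun x hx => ?_⟩
  by_contra! hlt
  have ha : a ∈ Set.Icc a b := ⟨le_rfl, hf.lt.le⟩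
  have hsub : ∀ y ∈ Set.Icc a b, y ∈ Set.Icc c d :=
    fun y hy => ⟨h1.le.trans hy.1, hy.2.trans h2.le⟩
  refine hm (meet_of_sign_change hf hg hx (hsub x hx) ha (hsub a ha) hlt ?_)
  rw [hf.left]; exact hg.nonneg a (hsub a ha)

/-- Filaments that do not meet are side by side or nested. -/
lemma disjoint_cases {a b : ℝ} {f : ℝ → ℝ} {c d : ℝ} {g : ℝ → ℝ}
    (hf : IsFilament a b f) (hg : IsFilament c d g) (hm : ¬ Meet a b f c d g) :
    b < c ∨ d < a ∨ Nested a b f c d g ∨ Nested c d g a b f := by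
  have hm' : ¬ Meet c d g a b f := fun h => hm h.symm
  by_contra! hcon
  obtain ⟨h1, h2, h3, h4⟩ := hcon
  rcases lt_or_ge c a with hca | hca <;> rcases lt_or_ge b d with hbd | hbd
  · exact h3 (nested_of_subset hf hg hca hbd hm)
  · exact hm' (meet_of_overlap hg hf hca.le h2 hbd)
  · exact hm (meet_of_overlap hf hg hca h1 hbd.le)
  · rcases hca.eq_or_lt with rfl | hca
    · exact hm' (meet_of_overlap hg hf le_rfl h2 hbd)
    · rcases hbd.eq_or_lt with rfl | hbd
      · exact hm (meet_of_overlap hf hg hca.le h1 le_rfl)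
      · exact h4 (nested_of_subset hg hf hca hbd hm')

lemma Nested.asymm {a b : ℝ} {f : ℝ → ℝ} {c d : ℝ} {g : ℝ → ℝ}
    (h : Nested a b f c d g) : ¬ Nested c d g a b f :=
  fun h' => lt_asymm h.1 h'.1

/-- A filament that meets a filament nested under `g`, but does not meet `g`, is itself nested
under `g`. -/
lemma Nested.propagate {a b : ℝ} {f : ℝ → ℝ} {c d : ℝ} {g : ℝ → ℝ} {p q : ℝ} {k : ℝ → ℝ}
    (hg : IsFilament c d g) (hk : IsFilament p q k) (h : Nested a b f c d g)
    (hfk : Meet a b f p q k) (hkg : ¬ Meet p q k c d g) : Nested p q k c d g := by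
  obtain ⟨h1, h2, h3⟩ := h
  obtain ⟨x, hx, hx', hxe⟩ := hfk
  rcases disjoint_cases hk hg hkg with h | h | h | h
  · linarith [hx.1, hx'.2]
  · linarith [hx.2, hx'.1]
  · exact h
  · have := h.2.2 x ⟨h1.le.trans hx.1, hx.2.trans h2.le⟩
    linarith [h3 x hx]

/-! ### The combinatorial obstruction -/

/-- The properties of the nesting relation `N` of a family of filaments with intersection
graph `A` that rule out a representation. Nothing is assumed about `A` on the diagonal. -/
structure NestingRel {V : Type} (A N : V → V → Prop) : Prop where
  asymm : ∀ u v, N u v → ¬ N v u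
  propagate : ∀ u v w, N u v → (u ≠ w ∧ A u w) ∧ w ≠ v ∧ ¬ A w v → N w v
  exists_nested_nbrs : ∀ S : Finset V, S.Nonempty → ∃ u ∈ S, ∀ p ∈ S, ∀ q ∈ S,
    (u ≠ p ∧ A u p) ∧ (u ≠ q ∧ A u q) ∧ p ≠ q ∧ ¬ A p q → N p q ∨ N q p

/-- In the last field, `u` is the filament whose right endpoint is leftmost: the domains of all its
neighbours contain that endpoint, so disjoint neighbours cannot be side by side. -/
lemma nestingRel_of_filaments {V : Type} {a b : V → ℝ} {f : V → ℝ → ℝ} {A : V → V → Prop}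
    (hfil : ∀ v, IsFilament (a v) (b v) (f v))
    (hA : ∀ u v, u ≠ v → (Meet (a u) (b u) (f u) (a v) (b v) (f v) ↔ A u v)) :
    NestingRel A (fun u v => Nested (a u) (b u) (f u) (a v) (b v) (f v)) where
  asymm u v h := h.asymm
  propagate u v w h hw :=
    h.propagate (hfil v) (hfil w) ((hA u w hw.1.1).2 hw.1.2)
      (fun hm => hw.2.2 ((hA w v hw.2.1).1 hm))
  exists_nested_nbrs S hS := by
    obtain ⟨u, hu, hmin⟩ := S.exists_min_image b hS
    refine ⟨u, hu, fun p hp q hq ⟨hup, huq, hpq, hnpq⟩ => ?_⟩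
    obtain ⟨x, hx, hx', -⟩ := (hA u p hup.1).2 hup.2
    obtain ⟨y, hy, hy', -⟩ := (hA u q huq.1).2 huq.2
    have hbp := hmin p hp
    have hbq := hmin q hq
    rcases disjoint_cases (hfil p) (hfil q) (fun hm => hnpq ((hA p q hpq).1 hm)) with h | h | h | h
    · linarith [hy.2, hy'.1]
    · linarith [hx.2, hx'.1]
    · exact Or.inl h
    · exact Or.inr h

/-- Abscissa of the corner of each L-shape. The corners lie on the diagonal and occur from left to
right in the order `11, 12, 0, 1, 2, 3, 13, 4, 5, 14, 6, 7, 8, 9, 15, 10`, at odd numbers. -/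
def corner : Fin 16 → ℕ := ![5, 7, 9, 11, 15, 17, 21, 23, 25, 27, 31, 1, 3, 13, 19, 29]

/-- Right end of each L-shape. -/
def rightEnd : Fin 16 → ℕ := ![8, 10, 12, 16, 18, 22, 24, 26, 28, 32, 32, 32, 14, 14, 30, 30]

/-- Bottom of each L-shape. -/
def bottom : Fin 16 → ℕ := ![0, 4, 6, 8, 10, 14, 16, 20, 22, 24, 0, 0, 2, 2, 18, 18]

/-- The intersection relation of the L-shapes: of two of them, the horizontal segment of the one
with the lower corner meets the vertical segment of the other. -/
def HookAdj (u v : Fin 16) : Prop :=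
  (corner u ≤ corner v ∧ corner v ≤ rightEnd u ∧ bottom v ≤ corner u) ∨
    (corner v ≤ corner u ∧ corner u ≤ rightEnd v ∧ bottom u ≤ corner v)

instance : DecidableRel HookAdj := fun u v => by unfold HookAdj; infer_instance

/-- The 12-cycle, traversed periodically from vertex `0` if `s = 0` and from the antipodal
vertex `6` if `s = 1`. These two choices are exchanged by a symmetry of the graph. -/
def cyc (s : Fin 2) (i : ℕ) : Fin 16 := Fin.ofNat 16 ((6 * s.val + i) % 12)

/-- The inner vertex next to `cyc s 0` of the path joining `cyc s 0` and `cyc s 3`. -/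
def chordStart (s : Fin 2) : Fin 16 := ![12, 14] s

/-- The inner vertex next to `cyc s 3` of the path joining `cyc s 0` and `cyc s 3`. -/
def chordEnd (s : Fin 2) : Fin 16 := ![13, 15] s

/-- The side condition under which nesting under `v` spreads from `u` to `w`. -/
def Spreads (u v w : Fin 16) : Prop := (u ≠ w ∧ HookAdj u w) ∧ w ≠ v ∧ ¬ HookAdj w v

instance (u v w : Fin 16) : Decidable (Spreads u v w) := by unfold Spreads; infer_instance

section
variable {N : Fin 16 → Fin 16 → Prop}

lemma nested_up (hN : NestingRel HookAdj N) (s : Fin 2) (v : Fin 16) {i k : ℕ} (hik : i ≤ k)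
    (h : N (cyc s i) v) (hs : ∀ j, i ≤ j → j < k → Spreads (cyc s j) v (cyc s (j + 1))) :
    N (cyc s k) v := by
  induction k, hik using Nat.le_induction with
  | base => exact h
  | succ k hik ih =>
    exact hN.propagate _ _ _ (ih fun j h1 h2 => hs j h1 (by omega)) (hs k hik (by omega))

lemma nested_down (hN : NestingRel HookAdj N) (s : Fin 2) (v : Fin 16) {i k : ℕ} (hik : i ≤ k)
    (h : N (cyc s k) v) (hs : ∀ j, i ≤ j → j < k → Spreads (cyc s (j + 1)) v (cyc s j)) :
    N (cyc s i) v := by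
  induction k, hik using Nat.le_induction with
  | base => exact h
  | succ k hik ih =>
    exact ih (hN.propagate _ _ _ h (hs k hik (by omega))) fun j h1 h2 => hs j h1 (by omega)

lemma cyc_add_twelve (s : Fin 2) (i : ℕ) : cyc s (i + 12) = cyc s i := by
  unfold cyc
  congr 1
  omega

lemma spreads_cycle : ∀ s : Fin 2, ∀ k < 11, 5 ≤ k → ∀ d < 8,
    Spreads (cyc s (k + 2 + d)) (cyc s k) (cyc s (k + 2 + d + 1)) ∧
      Spreads (cyc s (k + 2 + d + 1)) (cyc s k) (cyc s (k + 2 + d)) := by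
  decide +kernel

/-- In the 12-cycle, some vertex has a vertex at distance two nested under it; up to the symmetry
of the graph it is one of `5, …, 10`. Nesting then spreads to all its non-neighbours in the
cycle. -/
lemma exists_top (hN : NestingRel HookAdj N) :
    ∃ s : Fin 2, ∃ k, 5 ≤ k ∧ k ≤ 10 ∧ ∀ j, k + 2 ≤ j → j ≤ k + 10 → N (cyc s j) (cyc s k) := by
  have hpair : ∃ s : Fin 2, ∃ k, 5 ≤ k ∧ k ≤ 10 ∧
      (N (cyc s (k + 2)) (cyc s k) ∨ N (cyc s (k + 10)) (cyc s k)) := by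
    obtain ⟨u, hu, h⟩ := hN.exists_nested_nbrs ((Finset.range 12).image (cyc 0)) (by decide)
    have hmid : ∀ u ∈ (Finset.range 12).image (cyc 0),
        ∃ i < 12, cyc 0 (i + 12) = u := by decide +kernel
    obtain ⟨i, hi, rfl⟩ := hmid u hu
    have hcond : ∀ i < 12, cyc 0 (i + 11) ∈ (Finset.range 12).image (cyc 0) ∧
        cyc 0 (i + 13) ∈ (Finset.range 12).image (cyc 0) ∧
        (cyc 0 (i + 12) ≠ cyc 0 (i + 11) ∧ HookAdj (cyc 0 (i + 12)) (cyc 0 (i + 11))) ∧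
        (cyc 0 (i + 12) ≠ cyc 0 (i + 13) ∧ HookAdj (cyc 0 (i + 12)) (cyc 0 (i + 13))) ∧
        cyc 0 (i + 11) ≠ cyc 0 (i + 13) ∧ ¬ HookAdj (cyc 0 (i + 11)) (cyc 0 (i + 13)) := by
      decide +kernel
    obtain ⟨h1, h2, h3⟩ := hcond i hi
    have hup : ∀ i < 12, ∃ s : Fin 2, ∃ k < 11, 5 ≤ k ∧ cyc 0 (i + 11) = cyc s k ∧
        cyc 0 (i + 13) = cyc s (k + 2) := by decide +kernel
    have hdown : ∀ i < 12, ∃ s : Fin 2, ∃ k < 11, 5 ≤ k ∧ cyc 0 (i + 13) = cyc s k ∧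
        cyc 0 (i + 11) = cyc s (k + 10) := by decide +kernel
    rcases h _ h1 _ h2 h3 with h | h
    · obtain ⟨s, k, hk, hk', e1, e2⟩ := hdown i hi
      rw [e1, e2] at h
      exact ⟨s, k, hk', by omega, Or.inr h⟩
    · obtain ⟨s, k, hk, hk', e1, e2⟩ := hup i hi
      rw [e1, e2] at h
      exact ⟨s, k, hk', by omega, Or.inl h⟩
  obtain ⟨s, k, hk, hk', h⟩ := hpair
  refine ⟨s, k, hk, hk', fun j hj hj' => ?_⟩
  rcases h with h | h
  · refine nested_up hN s _ hj h fun i h1 h2 => ?_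
    obtain ⟨d, rfl⟩ := Nat.exists_eq_add_of_le h1
    exact (spreads_cycle s k (by omega) hk d (by omega)).1
  · refine nested_down hN s _ hj' h fun i h1 h2 => ?_
    obtain ⟨d, rfl⟩ := Nat.exists_eq_add_of_le (hj.trans h1)
    exact (spreads_cycle s k (by omega) hk d (by omega)).2

/-- The 6-cycle formed by a chord path and the short arc of the 12-cycle between its ends. -/
def hexagon (s : Fin 2) : Finset (Fin 16) :=
  {cyc s 0, cyc s 1, cyc s 2, cyc s 3, chordEnd s, chordStart s}

lemma not_nestingRel (hN : NestingRel HookAdj N) : False := by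
  obtain ⟨s, k, hk, hk', htop⟩ := exists_top hN
  have n0 : N (cyc s 0) (cyc s k) :=
    cyc_add_twelve s 0 ▸ htop (0 + 12) (by omega) (by omega)
  have n1 : N (cyc s 1) (cyc s k) :=
    cyc_add_twelve s 1 ▸ htop (1 + 12) (by omega) (by omega)
  have n2 : N (cyc s 2) (cyc s k) :=
    cyc_add_twelve s 2 ▸ htop (2 + 12) (by omega) (by omega)
  have n3 : N (cyc s 3) (cyc s k) :=
    cyc_add_twelve s 3 ▸ htop (3 + 12) (by omega) (by omega)
  have hchord : ∀ s : Fin 2, ∀ k < 11, 5 ≤ k → Spreads (cyc s 0) (cyc s k) (chordStart s) ∧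
      Spreads (cyc s 3) (cyc s k) (chordEnd s) := by decide +kernel
  have nx := hN.propagate _ _ _ n0 (hchord s k (by omega) hk).1
  have ny := hN.propagate _ _ _ n3 (hchord s k (by omega) hk).2
  -- From the end `cyc s 0` of the short arc, nesting spreads backwards along the long arc to the
  -- top vertex `cyc s k`; from the end `cyc s 3` it spreads forwards.
  have back : ∀ q, N q (cyc s k) → q = cyc s 2 ∨ q = cyc s 3 ∨ q = chordEnd s →
      ¬ N (cyc s 0) q := by
    intro q hq hqs h
    have hsp : ∀ s : Fin 2, ∀ q, q = cyc s 2 ∨ q = cyc s 3 ∨ q = chordEnd s →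
        ∀ j < 12, 5 ≤ j → Spreads (cyc s (j + 1)) q (cyc s j) := by decide +kernel
    rw [← cyc_add_twelve] at h
    exact hN.asymm _ _ hq (nested_down hN s q (show k ≤ 0 + 12 by omega) h fun j h1 h2 =>
      hsp s q hqs j h2 (by omega))
  have forth : ∀ q, N q (cyc s k) → q = cyc s 1 ∨ q = cyc s 0 ∨ q = chordStart s →
      ¬ N (cyc s 3) q := by
    intro q hq hqs h
    have hsp : ∀ s : Fin 2, ∀ q, q = cyc s 1 ∨ q = cyc s 0 ∨ q = chordStart s →
        ∀ j < 10, 3 ≤ j → Spreads (cyc s j) q (cyc s (j + 1)) := by decide +kernel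
    exact hN.asymm _ _ hq (nested_up hN s q (show 3 ≤ k by omega) h fun j h1 h2 =>
      hsp s q hqs j (by omega) h1)
  obtain ⟨u, hu, h⟩ := hN.exists_nested_nbrs (hexagon s) ⟨cyc s 0, by simp [hexagon]⟩
  -- The side conditions for the pairs at distance two and for the short walks to the ends
  -- of the arc, grouped by the middle vertex of the pair.
  have c0 : ∀ s : Fin 2, ((cyc s 0 ≠ chordStart s ∧ HookAdj (cyc s 0) (chordStart s)) ∧
      (cyc s 0 ≠ cyc s 1 ∧ HookAdj (cyc s 0) (cyc s 1)) ∧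
      chordStart s ≠ cyc s 1 ∧ ¬ HookAdj (chordStart s) (cyc s 1)) ∧
      Spreads (chordStart s) (cyc s 1) (chordEnd s) ∧ Spreads (chordEnd s) (cyc s 1) (cyc s 3) ∧
      Spreads (cyc s 1) (chordStart s) (cyc s 2) ∧
      Spreads (cyc s 2) (chordStart s) (cyc s 3) := by decide +kernel
  have c1 : ∀ s : Fin 2, ((cyc s 1 ≠ cyc s 0 ∧ HookAdj (cyc s 1) (cyc s 0)) ∧
      (cyc s 1 ≠ cyc s 2 ∧ HookAdj (cyc s 1) (cyc s 2)) ∧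
      cyc s 0 ≠ cyc s 2 ∧ ¬ HookAdj (cyc s 0) (cyc s 2)) ∧
      Spreads (cyc s 2) (cyc s 0) (cyc s 3) := by decide +kernel
  have c2 : ∀ s : Fin 2, ((cyc s 2 ≠ cyc s 1 ∧ HookAdj (cyc s 2) (cyc s 1)) ∧
      (cyc s 2 ≠ cyc s 3 ∧ HookAdj (cyc s 2) (cyc s 3)) ∧
      cyc s 1 ≠ cyc s 3 ∧ ¬ HookAdj (cyc s 1) (cyc s 3)) ∧
      Spreads (cyc s 1) (cyc s 3) (cyc s 0) := by decide +kernel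
  have c3 : ∀ s : Fin 2, ((cyc s 3 ≠ cyc s 2 ∧ HookAdj (cyc s 3) (cyc s 2)) ∧
      (cyc s 3 ≠ chordEnd s ∧ HookAdj (cyc s 3) (chordEnd s)) ∧
      cyc s 2 ≠ chordEnd s ∧ ¬ HookAdj (cyc s 2) (chordEnd s)) ∧
      Spreads (cyc s 2) (chordEnd s) (cyc s 1) ∧ Spreads (cyc s 1) (chordEnd s) (cyc s 0) ∧
      Spreads (chordEnd s) (cyc s 2) (chordStart s) ∧
      Spreads (chordStart s) (cyc s 2) (cyc s 0) := by decide +kernel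
  have cy : ∀ s : Fin 2, ((chordEnd s ≠ cyc s 3 ∧ HookAdj (chordEnd s) (cyc s 3)) ∧
      (chordEnd s ≠ chordStart s ∧ HookAdj (chordEnd s) (chordStart s)) ∧
      cyc s 3 ≠ chordStart s ∧ ¬ HookAdj (cyc s 3) (chordStart s)) ∧
      Spreads (chordStart s) (cyc s 3) (cyc s 0) := by decide +kernel
  have cx : ∀ s : Fin 2, ((chordStart s ≠ chordEnd s ∧ HookAdj (chordStart s) (chordEnd s)) ∧
      (chordStart s ≠ cyc s 0 ∧ HookAdj (chordStart s) (cyc s 0)) ∧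
      chordEnd s ≠ cyc s 0 ∧ ¬ HookAdj (chordEnd s) (cyc s 0)) ∧
      Spreads (chordEnd s) (cyc s 0) (cyc s 3) := by decide +kernel
  have m0 : cyc s 0 ∈ hexagon s := by simp [hexagon]
  have m1 : cyc s 1 ∈ hexagon s := by simp [hexagon]
  have m2 : cyc s 2 ∈ hexagon s := by simp [hexagon]
  have m3 : cyc s 3 ∈ hexagon s := by simp [hexagon]
  have my : chordEnd s ∈ hexagon s := by simp [hexagon]
  have mx : chordStart s ∈ hexagon s := by simp [hexagon]
  have hu' : u = cyc s 0 ∨ u = cyc s 1 ∨ u = cyc s 2 ∨ u = cyc s 3 ∨ u = chordEnd s ∨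
      u = chordStart s := by simpa [hexagon] using hu
  rcases hu' with rfl | rfl | rfl | rfl | rfl | rfl
  · obtain ⟨hc, w1, w2, w3, w4⟩ := c0 s
    rcases h _ mx _ m1 hc with h | h
    · exact forth _ n1 (by simp) (hN.propagate _ _ _ (hN.propagate _ _ _ h w1) w2)
    · exact forth _ nx (by simp) (hN.propagate _ _ _ (hN.propagate _ _ _ h w3) w4)
  · obtain ⟨hc, w⟩ := c1 s
    rcases h _ m0 _ m2 hc with h | h
    · exact back _ n2 (by simp) h
    · exact forth _ n0 (by simp) (hN.propagate _ _ _ h w)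
  · obtain ⟨hc, w⟩ := c2 s
    rcases h _ m1 _ m3 hc with h | h
    · exact back _ n3 (by simp) (hN.propagate _ _ _ h w)
    · exact forth _ n1 (by simp) h
  · obtain ⟨hc, w1, w2, w3, w4⟩ := c3 s
    rcases h _ m2 _ my hc with h | h
    · exact back _ ny (by simp) (hN.propagate _ _ _ (hN.propagate _ _ _ h w1) w2)
    · exact back _ n2 (by simp) (hN.propagate _ _ _ (hN.propagate _ _ _ h w3) w4)
  · obtain ⟨hc, w⟩ := cy s
    rcases h _ m3 _ mx hc with h | h
    · exact forth _ nx (by simp) h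
    · exact back _ n3 (by simp) (hN.propagate _ _ _ h w)
  · obtain ⟨hc, w⟩ := cx s
    rcases h _ my _ m0 hc with h | h
    · exact forth _ n0 (by simp) (hN.propagate _ _ _ h w)
    · exact back _ ny (by simp) h

end

/-! ### The monotone L-family -/

/-- L-shapes with corners on the diagonal meet exactly when each corner parameter lies in the
range of the other L-shape. -/
lemma cornerLShape_inter_nonempty {c r l c' r' l' : ℝ} (hr : c < r) (hl : l < c) (hr' : c' < r')
    (hl' : l' < c') :
    (CornerLShape c r c l ∩ CornerLShape c' r' c' l').Nonempty ↔
      (c ≤ c' ∧ c' ≤ r ∧ l' ≤ c) ∨ (c' ≤ c ∧ c ≤ r' ∧ l ≤ c') := by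
  constructor
  · rintro ⟨⟨x, y⟩, h1, h2⟩
    simp only [CornerLShape, Set.mem_union, Set.mem_prod, Set.mem_singleton_iff, Set.mem_Icc]
      at h1 h2
    rcases le_total c c' with h | h
    · left
      rcases h1 with ⟨rfl, h3, h4⟩ | ⟨⟨h3, h4⟩, rfl⟩ <;>
      rcases h2 with ⟨h5, h6, h7⟩ | ⟨⟨h5, h6⟩, h7⟩ <;> refine ⟨?_, ?_, ?_⟩ <;> linarith
    · right
      rcases h1 with ⟨rfl, h3, h4⟩ | ⟨⟨h3, h4⟩, rfl⟩ <;>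
      rcases h2 with ⟨h5, h6, h7⟩ | ⟨⟨h5, h6⟩, h7⟩ <;> refine ⟨?_, ?_, ?_⟩ <;> linarith
  · rintro (⟨h1, h2, h3⟩ | ⟨h1, h2, h3⟩)
    · exact ⟨(c', c), Or.inr ⟨⟨h1, h2⟩, rfl⟩, Or.inl ⟨rfl, h3, h1⟩⟩
    · exact ⟨(c, c'), Or.inl ⟨rfl, h3, h1⟩, Or.inr ⟨⟨h1, h2⟩, rfl⟩⟩

/-- There is a monotone L-graph which is not an interval filament graph. -/
theorem monotone_L_not_interval_filament :
    ∃ (n : ℕ) (x₀ x₁ y₀ y₁ : Fin n → ℝ),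
      (∀ v, x₀ v < x₁ v) ∧ (∀ v, y₁ v < y₀ v) ∧
      (∃ m q : ℝ, 0 < m ∧ ∀ v, y₀ v = m * x₀ v + q) ∧
      ∀ (a b : Fin n → ℝ) (f : Fin n → ℝ → ℝ),
        (∀ v, a v < b v) →
        (∀ v, ContinuousOn (f v) (Set.Icc (a v) (b v))) →
        (∀ v, ∀ x ∈ Set.Icc (a v) (b v), 0 ≤ f v x) →
        (∀ v, f v (a v) = 0 ∧ f v (b v) = 0) →
        ¬ (∀ u v : Fin n, u ≠ v →
            ((FilCurve (a u) (b u) (f u) ∩ FilCurve (a v) (b v) (f v)).Nonempty ↔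
              (CornerLShape (x₀ u) (x₁ u) (y₀ u) (y₁ u) ∩
                CornerLShape (x₀ v) (x₁ v) (y₀ v) (y₁ v)).Nonempty)) := by
  have hr : ∀ v, (corner v : ℝ) < rightEnd v := by
    intro v; exact_mod_cast (by decide : ∀ v, corner v < rightEnd v) v
  have hl : ∀ v, (bottom v : ℝ) < corner v := by
    intro v; exact_mod_cast (by decide : ∀ v, bottom v < corner v) v
  refine ⟨16, fun v => corner v, fun v => rightEnd v, fun v => corner v, fun v => bottom v,
    hr, hl, ⟨1, 0, one_pos, fun v => by ring⟩, ?_⟩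
  intro a b f hab hcont hnn hend hiff
  have hA : ∀ u v, u ≠ v → (Meet (a u) (b u) (f u) (a v) (b v) (f v) ↔ HookAdj u v) := by
    intro u v huv
    rw [← filCurve_inter_nonempty, hiff u v huv,
      cornerLShape_inter_nonempty (hr u) (hl u) (hr v) (hl v)]
    simp only [HookAdj, Nat.cast_le]
  exact not_nestingRel (nestingRel_of_filaments
    (fun v => ⟨hab v, hcont v, hnn v, (hend v).1, (hend v).2⟩) hA)
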